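/- Let n ≥ 2 and let G_1, ..., G_n be finite groups. The direct product G_1 × G_2 × ⋯ × G_n is a solvable BT-group if and only if each G_i is a solvable BT-group with nilpotent residual L_i, and gcd(|L_i|, |G_j|) = 1 for all 1 ≤ i, j ≤ n with i ≠ j. -/

import Mathlib

open scoped Pointwise

section Defs

variable {G : Type*} [Group G]

/-- `K` is an SS-permutable supplement of `H` in `G`: `HK = G` and `H` permutes with
every Sylow subgroup of `K`. -/
def IsSSSupplement (H K : Subgroup G) : Prop :=
  (H : Set G) * (K : Set G) = Set.univ ∧
    ∀ (p : ℕ) [Fact p.Prime] (P : Sylow p K),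
      (H : Set G) * ((P.toSubgroup.map K.subtype : Subgroup G) : Set G) =
        ((P.toSubgroup.map K.subtype : Subgroup G) : Set G) * (H : Set G)

/-- `H` is SS-permutable in `G`: `H` has a supplement `K` such that `H` permutes with
every Sylow subgroup of `K`. -/
def IsSSPermutable (H : Subgroup G) : Prop :=
  ∃ K : Subgroup G, IsSSSupplement H K

/-- `H` is NSS-permutable in `G`: `H` has a normal supplement `K` such that `H` permutes
with every Sylow subgroup of `K`. -/
def IsNSSPermutable (H : Subgroup G) : Prop :=
  ∃ K : Subgroup G, K.Normal ∧ IsSSSupplement H K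

/-- `H` is S-permutable in `G`: it permutes with every Sylow subgroup of `G`. -/
def IsSPermutable (H : Subgroup G) : Prop :=
  ∀ (p : ℕ) [Fact p.Prime] (P : Sylow p G),
    (H : Set G) * ((P : Subgroup G) : Set G) = ((P : Subgroup G) : Set G) * (H : Set G)

/-- `H` is semipermutable in `G`: `HX = XH` for every subgroup `X` with `gcd(|H|,|X|) = 1`. -/
def IsSemipermutable (H : Subgroup G) : Prop :=
  ∀ X : Subgroup G, Nat.Coprime (Nat.card H) (Nat.card X) →
    (H : Set G) * (X : Set G) = (X : Set G) * (H : Set G)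

/-- `H` is S-semipermutable in `G`: `HQ = QH` for every Sylow `q`-subgroup `Q` of `G`
with `q` a prime not dividing `|H|`. -/
def IsSSemipermutable (H : Subgroup G) : Prop :=
  ∀ (q : ℕ) [Fact q.Prime], ¬ q ∣ Nat.card H → ∀ Q : Sylow q G,
    (H : Set G) * ((Q : Subgroup G) : Set G) = ((Q : Subgroup G) : Set G) * (H : Set G)

end Defs

/-- `G` is an SST-group: SS-permutability is a transitive relation. -/
def IsSSTGroup (G : Type*) [Group G] : Prop :=
  ∀ H K : Subgroup G, H ≤ K → IsSSPermutable (H.subgroupOf K) → IsSSPermutable K →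
    IsSSPermutable H

/-- `G` is an NSST-group: NSS-permutability is a transitive relation. -/
def IsNSSTGroup (G : Type*) [Group G] : Prop :=
  ∀ H K : Subgroup G, H ≤ K → IsNSSPermutable (H.subgroupOf K) → IsNSSPermutable K →
    IsNSSPermutable H

/-- `G` is a PST-group: S-permutability is a transitive relation. -/
def IsPSTGroup (G : Type*) [Group G] : Prop :=
  ∀ H K : Subgroup G, H ≤ K → IsSPermutable (H.subgroupOf K) → IsSPermutable K →
    IsSPermutable H

/-- `G` is a BT-group: semipermutability is a transitive relation. -/
def IsBTGroup (G : Type*) [Group G] : Prop :=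
  ∀ H K : Subgroup G, H ≤ K → IsSemipermutable (H.subgroupOf K) → IsSemipermutable K →
    IsSemipermutable H

/-- `L` is the nilpotent residual of `G`: the smallest normal subgroup of `G`
with nilpotent quotient. -/
def IsNilpotentResidual {G : Type*} [Group G] (L : Subgroup G) : Prop :=
  L.Normal ∧ ∀ [L.Normal], Group.IsNilpotent (G ⧸ L) ∧
    ∀ (N : Subgroup G) [N.Normal], Group.IsNilpotent (G ⧸ N) → L ≤ N

/-!
A finite solvable group is a BT-group exactly when `⟨x⟩⟨y⟩ = ⟨y⟩⟨x⟩` for all `x`, `y` of coprime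
order: transitivity descends along a chain of subgroups of prime index, and for coprime `x`, `y` one
of the two always lies in the next term of the chain.

If `G × K` has this property and `y ∈ K` has prime order `p`, then comparing `(x, y)` with `(g, 1)`
shows that every `p`-element `x` of `G` normalizes every subgroup of `G` of order prime to `p`.
Hence `G` has a normal `p`-complement, which contains the nilpotent residual, so `p` does not divide
the order of the residual.

Conversely, elements of coprime order commute modulo the nilpotent residual `L i`. So in the `i`-th
factor `x y = y b a x` with `b ∈ ⟨y⟩ ⊓ L i` and `a ∈ ⟨x⟩ ⊓ L i`. As `|L i|` is coprime to the orders
of the other factors, these corrections assemble to powers of `y` and `x` in the product.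
-/

open scoped commutatorElement

section Permute

variable {G : Type*} [Group G]

theorem coe_sup_of_mul_comm {H K : Subgroup G} (h : (H : Set G) * K = (K : Set G) * H) :
    ((H ⊔ K : Subgroup G) : Set G) = (H : Set G) * K := by
  rw [Subgroup.sup_eq_closure_mul]
  refine Set.Subset.antisymm (fun x hx => ?_) Subgroup.subset_closure
  induction hx using Subgroup.closure_induction with
  | mem _ hx => exact hx
  | one => exact ⟨1, one_mem H, 1, one_mem K, mul_one 1⟩
  | mul x y _ _ hx hy =>
    have hxy := Set.mul_mem_mul hx hy
    rwa [mul_assoc, ← mul_assoc (K : Set G), ← h, mul_assoc (H : Set G), coe_mul_coe K,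
      ← mul_assoc, coe_mul_coe H] at hxy
  | inv x _ hx =>
    have hinv := Set.inv_mem_inv.mpr hx
    rwa [mul_inv_rev, inv_coe_set, inv_coe_set, ← h] at hinv

theorem card_sup_of_mul_comm_of_disjoint {H K : Subgroup G}
    (h : (H : Set G) * K = (K : Set G) * H) (hdisj : Disjoint H K) :
    Nat.card (H ⊔ K : Subgroup G) = Nat.card H * Nat.card K := by
  have hrange : Set.range (fun g : H × K => (g.1 * g.2 : G)) = ((H ⊔ K : Subgroup G) : Set G) := by
    rw [coe_sup_of_mul_comm h]
    ext x
    simp [Set.mem_mul]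
  rw [← Nat.card_prod, ← Nat.card_range_of_injective (Subgroup.mul_injective_of_disjoint hdisj),
    hrange]
  rfl

theorem isSemipermutable_of_normal (N : Subgroup G) [N.Normal] : IsSemipermutable N :=
  fun X _ => (Subgroup.set_mul_normal_comm (X : Set G) N).symm

theorem isSemipermutable_of_map {K : Type*} [Group K] {f : K →* G} (hf : Function.Injective f)
    {H : Subgroup K} (h : IsSemipermutable (H.map f)) : IsSemipermutable H := by
  intro X hX
  have hmap := h (X.map f) (by rwa [Subgroup.card_map_of_injective hf,
    Subgroup.card_map_of_injective hf])
  simp only [Subgroup.coe_map, ← Set.image_mul] at hmap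
  exact hf.image_injective hmap

theorem mem_of_coprime_orderOf_index {N : Subgroup G} [N.Normal] {x : G}
    (h : (orderOf x).Coprime N.index) : x ∈ N := by
  rw [← QuotientGroup.eq_one_iff, ← orderOf_eq_one_iff]
  exact Nat.eq_one_of_dvd_coprimes h (orderOf_map_dvd (QuotientGroup.mk' N) x)
    (orderOf_dvd_natCard _)

theorem mem_or_mem_of_coprime_orderOf_of_prime_index {N : Subgroup G} [N.Normal]
    (hN : N.index.Prime) {x y : G} (h : (orderOf x).Coprime (orderOf y)) : x ∈ N ∨ y ∈ N := by
  by_cases hx : N.index ∣ orderOf x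
  · exact .inr (mem_of_coprime_orderOf_index (h.coprime_dvd_left hx).symm)
  · exact .inl (mem_of_coprime_orderOf_index (hN.coprime_iff_not_dvd.mpr hx).symm)

theorem mem_of_mem_normalizer_of_coprime_orderOf {H : Subgroup G} {h w : G} (hh : h ∈ H)
    (hw : w ∈ Subgroup.normalizer (H : Set G)) (hcop : (orderOf (h * w)).Coprime (orderOf w)) :
    w ∈ H := by
  let N := Subgroup.normalizer (H : Set G)
  let g' : N := ⟨h, Subgroup.le_normalizer hh⟩
  let w' : N := ⟨w, hw⟩
  let π := QuotientGroup.mk' (H.subgroupOf N)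
  have hg' : π g' = 1 := (QuotientGroup.eq_one_iff g').mpr hh
  have hdvd : orderOf (π w') ∣ orderOf (h * w) := by
    have hmul : π (g' * w') = π w' := by rw [map_mul, hg', one_mul]
    have horder : orderOf (g' * w') = orderOf (h * w) := (Subgroup.orderOf_coe (g' * w')).symm
    rw [← hmul, ← horder]
    exact orderOf_map_dvd π (g' * w')
  have hone : π w' = 1 := orderOf_eq_one_iff.mp <| Nat.eq_one_of_dvd_coprimes hcop hdvd
    (Subgroup.orderOf_coe w' ▸ orderOf_map_dvd π w')
  exact (QuotientGroup.eq_one_iff w').mp hone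

theorem normal_of_sylow_le_normalizer {p : ℕ} [Fact p.Prime] [Finite G] (P : Sylow p G)
    {T : Subgroup G} {k : ℕ} (hT : T.index = p ^ k)
    (hP : (P : Subgroup G) ≤ Subgroup.normalizer (T : Set G)) : T.Normal := by
  rw [← Subgroup.normalizer_eq_top_iff, ← Subgroup.index_eq_one]
  have hcop : (P : Subgroup G).index.Coprime (p ^ k) :=
    (((Fact.out : p.Prime).coprime_iff_not_dvd.mpr P.not_dvd_index).symm).pow_right k
  exact Nat.eq_one_of_dvd_coprimes hcop (Subgroup.index_dvd_of_le hP)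
    (hT ▸ Subgroup.index_dvd_of_le Subgroup.le_normalizer)

end Permute

section Solvable

theorem isSolvable_pi_iff {ι : Type*} [Finite ι] {G : ι → Type*} [∀ i, Group (G i)] :
    Group.IsSolvable (∀ i, G i) ↔ ∀ i, Group.IsSolvable (G i) := by
  constructor
  · intro _ i
    exact Group.isSolvable_of_surjective (f := Pi.evalMonoidHom G i) (Function.surjective_eval i)
  · intro h
    have := Fintype.ofFinite ι
    choose k hk using fun i => (h i).solvable
    refine ⟨Finset.univ.sup k, (Subgroup.eq_bot_iff_forall _).mpr fun x hx => funext fun i => ?_⟩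
    have hxi : x i ∈ derivedSeries (G i) (Finset.univ.sup k) :=
      map_derivedSeries_le_derivedSeries (Pi.evalMonoidHom G i) _ ⟨x, hx, rfl⟩
    have hxi' := derivedSeries_antitone (G i) (Finset.le_sup (f := k) (Finset.mem_univ i)) hxi
    rwa [hk, Subgroup.mem_bot] at hxi'

variable {G : Type*} [Group G]

theorem isSimpleGroup_quotient_of_isCoatom {N : Subgroup G} [N.Normal] (hN : IsCoatom N) :
    IsSimpleGroup (G ⧸ N) := by
  let e : Subgroup (G ⧸ N) ≃o Set.Ici N := QuotientGroup.comapMk'OrderIso N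
  have : IsSimpleOrder (Subgroup (G ⧸ N)) :=
    e.isSimpleOrder_iff.mpr (Set.isSimpleOrder_Ici_iff_isCoatom.mpr hN)
  have : Nontrivial (G ⧸ N) := QuotientGroup.nontrivial_iff.mpr hN.1
  exact ⟨fun H _ => eq_bot_or_eq_top H⟩

theorem exists_normal_prime_index [Finite G] [Nontrivial G] [Group.IsSolvable G] :
    ∃ N : Subgroup G, N.Normal ∧ N.index.Prime := by
  obtain ⟨N, hN, hle⟩ := (eq_top_or_exists_le_coatom (commutator G)).resolve_left
    (Group.IsSolvable.commutator_lt_top_of_nontrivial G).ne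
  have hnormal : N.Normal := Subgroup.Normal.of_commutator_le G hle
  have : IsMulCommutative (G ⧸ N) :=
    Subgroup.Normal.quotient_commutative_iff_commutator_le.mpr hle
  exact ⟨N, hnormal, Group.is_simple_iff_prime_card.mp (isSimpleGroup_quotient_of_isCoatom hN)⟩

end Solvable

section Nilpotent

variable {G : Type*} [Group G]

theorem orderOf_commutatorElement_dvd_right {x y : G} (h : Commute ⁅x, y⁆ y) :
    orderOf ⁅x, y⁆ ∣ orderOf y := by
  have hconj : ⁅x, y⁆ * y = x * y * x⁻¹ := by
    rw [commutatorElement_def, inv_mul_cancel_right]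
  have hpow := h.mul_pow (orderOf y)
  rw [hconj, conj_pow, pow_orderOf_eq_one, mul_one, mul_inv_cancel, mul_one] at hpow
  exact orderOf_dvd_of_pow_eq_one hpow.symm

theorem commute_of_coprime_orderOf_of_commutatorElement_mem_center {x y : G}
    (h : (orderOf x).Coprime (orderOf y)) (hc : ⁅x, y⁆ ∈ Subgroup.center G) : Commute x y := by
  have hx : orderOf ⁅x, y⁆ ∣ orderOf x := by
    rw [← orderOf_inv, commutatorElement_inv]
    refine orderOf_commutatorElement_dvd_right ?_
    rw [← commutatorElement_inv]
    have hcomm : Commute ⁅x, y⁆ x := (Subgroup.mem_center_iff.mp hc x).symm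
    exact hcomm.inv_left
  have hy : orderOf ⁅x, y⁆ ∣ orderOf y :=
    orderOf_commutatorElement_dvd_right (Subgroup.mem_center_iff.mp hc y).symm
  exact commutatorElement_eq_one_iff_commute.mp <| orderOf_eq_one_iff.mp <|
    Nat.eq_one_of_dvd_coprimes h hx hy

theorem commute_of_coprime_orderOf [Group.IsNilpotent G] {x y : G}
    (h : (orderOf x).Coprime (orderOf y)) : Commute x y := by
  refine Group.nilpotent_center_quotient_ind
    (P := fun G _ _ => ∀ x y : G, (orderOf x).Coprime (orderOf y) → Commute x y) G ?_ ?_ x y h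
  · intro G _ _ x y _
    exact Subsingleton.elim _ _
  · intro G _ _ ih x y h
    let π := QuotientGroup.mk' (Subgroup.center G)
    have hπ : Commute (π x) (π y) :=
      ih _ _ ((h.coprime_dvd_left (orderOf_map_dvd π x)).coprime_dvd_right (orderOf_map_dvd π y))
    refine commute_of_coprime_orderOf_of_commutatorElement_mem_center h ?_
    rw [← QuotientGroup.eq_one_iff]
    exact commutatorElement_eq_one_iff_commute.mpr hπ

theorem isNilpotent_quotient_iff_exists_lowerCentralSeries_le {N : Subgroup G} [N.Normal] :
    Group.IsNilpotent (G ⧸ N) ↔ ∃ k, (⊤ : Subgroup G).lowerCentralSeries k ≤ N := by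
  have hmap (k : ℕ) : (⊤ : Subgroup (G ⧸ N)).lowerCentralSeries k =
      ((⊤ : Subgroup G).lowerCentralSeries k).map (QuotientGroup.mk' N) := by
    rw [Subgroup.map_lowerCentralSeries,
      Subgroup.map_top_of_surjective _ (QuotientGroup.mk'_surjective N)]
  simp only [Subgroup.nilpotent_iff_lowerCentralSeries, hmap, Subgroup.map_eq_bot_iff,
    QuotientGroup.ker_mk']

theorem exists_isNilpotentResidual (G : Type*) [Group G] [WellFoundedLT (Subgroup G)] :
    ∃ L : Subgroup G, IsNilpotentResidual L := by
  let γ := (⊤ : Subgroup G).lowerCentralSeries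
  have hγ : Antitone γ := (⊤ : Subgroup G).lowerCentralSeries_antitone
  obtain ⟨n, hn⟩ := WellFoundedGT.monotone_chain_condition
    (⟨fun k => OrderDual.toDual (γ k), hγ⟩ : ℕ →o (Subgroup G)ᵒᵈ)
  refine ⟨γ n, inferInstance, fun {_} =>
    ⟨isNilpotent_quotient_iff_exists_lowerCentralSeries_le.mpr ⟨n, le_rfl⟩, fun N _ hN => ?_⟩⟩
  obtain ⟨k, hk⟩ := isNilpotent_quotient_iff_exists_lowerCentralSeries_le.mp hN
  calc γ n = γ (max n k) := OrderDual.toDual_inj.mp (hn _ (le_max_left n k))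
    _ ≤ γ k := hγ (le_max_right n k)
    _ ≤ N := hk

end Nilpotent

/-- Any two elements of coprime order generate permuting cyclic subgroups. The condition is stated
one-sidedly; exchanging the two elements gives the opposite inclusion. -/
def CoprimePermute (G : Type*) [Group G] : Prop :=
  ∀ x y : G, (orderOf x).Coprime (orderOf y) → ∃ m n : ℤ, x * y = y ^ m * x ^ n

section BTGroup

variable {G : Type*} [Group G]

theorem CoprimePermute.of_injective {K : Type*} [Group K] (hG : CoprimePermute G) (f : K →* G)
    (hf : Function.Injective f) : CoprimePermute K := by
  intro x y hxy
  rw [← orderOf_injective f hf x, ← orderOf_injective f hf y] at hxy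
  obtain ⟨m, n, h⟩ := hG _ _ hxy
  exact ⟨m, n, hf (by simpa only [map_mul, map_zpow] using h)⟩

theorem CoprimePermute.mul_subset_mul (hG : CoprimePermute G) {H K : Subgroup G}
    (h : (Nat.card H).Coprime (Nat.card K)) : (H : Set G) * K ⊆ (K : Set G) * H := by
  rintro _ ⟨x, hx, y, hy, rfl⟩
  obtain ⟨m, n, hmn⟩ := hG x y ((h.coprime_dvd_left (H.orderOf_dvd_natCard hx)).coprime_dvd_right
    (K.orderOf_dvd_natCard hy))
  exact ⟨y ^ m, K.zpow_mem hy m, x ^ n, H.zpow_mem hx n, hmn.symm⟩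

theorem CoprimePermute.isSemipermutable (hG : CoprimePermute G) (H : Subgroup G) :
    IsSemipermutable H :=
  fun _ h => (hG.mul_subset_mul h).antisymm (hG.mul_subset_mul h.symm)

theorem coprimePermute_of_isSemipermutable_zpowers {N : Subgroup G} [N.Normal]
    (hN : N.index.Prime) (h : ∀ z ∈ N, IsSemipermutable (Subgroup.zpowers z)) :
    CoprimePermute G := by
  intro x y hxy
  have hcard : (Nat.card (Subgroup.zpowers x)).Coprime (Nat.card (Subgroup.zpowers y)) := by
    rwa [Nat.card_zpowers, Nat.card_zpowers]
  have hcomm : (Subgroup.zpowers x : Set G) * Subgroup.zpowers y =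
      Subgroup.zpowers y * (Subgroup.zpowers x : Set G) := by
    rcases mem_or_mem_of_coprime_orderOf_of_prime_index hN hxy with hx | hy
    · exact h x hx _ hcard
    · exact (h y hy _ hcard.symm).symm
  obtain ⟨_, ⟨m, rfl⟩, _, ⟨n, rfl⟩, hmn⟩ :=
    hcomm ▸ Set.mul_mem_mul (Subgroup.mem_zpowers x) (Subgroup.mem_zpowers y)
  exact ⟨m, n, hmn.symm⟩

theorem IsBTGroup.coprimePermute_of_isSemipermutable [Finite G] [Group.IsSolvable G]
    (hG : IsBTGroup G) {M : Subgroup G} (hM : IsSemipermutable M) : CoprimePermute M := by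
  induction M using WellFoundedLT.induction with
  | ind M ih =>
  rcases subsingleton_or_nontrivial M with _ | _
  · exact fun _ _ _ => ⟨0, 0, Subsingleton.elim _ _⟩
  obtain ⟨N, _, hprime⟩ := exists_normal_prime_index (G := M)
  have hle : N.map M.subtype ≤ M := Subgroup.map_subtype_le N
  have hlt : N.map M.subtype < M := by
    refine hle.lt_of_ne fun heq => hprime.ne_one (Subgroup.index_eq_one.mpr ?_)
    refine Subgroup.map_injective M.subtype_injective ?_
    rw [heq, ← MonoidHom.range_eq_map, Subgroup.range_subtype]
  have hN : IsSemipermutable (N.map M.subtype) := by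
    refine hG _ M hle ?_ hM
    rw [Subgroup.subgroupOf, Subgroup.comap_map_eq_self_of_injective M.subtype_injective]
    exact isSemipermutable_of_normal N
  refine coprimePermute_of_isSemipermutable_zpowers hprime fun z hz =>
    isSemipermutable_of_map M.subtype_injective ?_
  rw [MonoidHom.map_zpowers]
  have hz' : Subgroup.zpowers (z : G) ≤ N.map M.subtype :=
    Subgroup.zpowers_le.mpr (Subgroup.mem_map_of_mem M.subtype hz)
  exact hG _ _ hz' ((ih _ hlt hN).isSemipermutable _) hN

theorem isBTGroup_iff_coprimePermute [Finite G] [Group.IsSolvable G] :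
    IsBTGroup G ↔ CoprimePermute G := by
  refine ⟨fun hG => ?_, fun hG H _ _ _ _ => hG.isSemipermutable H⟩
  exact (hG.coprimePermute_of_isSemipermutable (isSemipermutable_of_normal ⊤)).of_injective
    (Subgroup.topEquiv (G := G)).symm.toMonoidHom (Subgroup.topEquiv (G := G)).symm.injective

end BTGroup

section Residual

variable {G : Type*} [Group G]

theorem CoprimePermute.exists_subgroup_card_eq [Finite G] (hG : CoprimePermute G) {n : ℕ}
    (hn : n ∣ Nat.card G) : ∃ T : Subgroup G, Nat.card T = n := by
  induction n using Nat.recOnPosPrimePosCoprime with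
  | prime_pow p k hp _ =>
    have := Fact.mk hp
    exact Sylow.exists_subgroup_card_pow_prime p hn
  | zero => exact absurd (Nat.eq_zero_of_zero_dvd hn) Nat.card_pos.ne'
  | one => exact ⟨⊥, Subgroup.card_bot⟩
  | coprime a b _ _ hab iha ihb =>
    obtain ⟨A, hA⟩ := iha ((dvd_mul_right a b).trans hn)
    obtain ⟨B, hB⟩ := ihb ((dvd_mul_left b a).trans hn)
    have hcop : (Nat.card A).Coprime (Nat.card B) := by rwa [hA, hB]
    refine ⟨A ⊔ B, ?_⟩
    rw [card_sup_of_mul_comm_of_disjoint (hG.isSemipermutable A B hcop)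
      (Subgroup.disjoint_of_coprime_natCard hcop), hA, hB]

theorem CoprimePermute.mem_normalizer_of_prod {K : Type*} [Group K]
    (hGK : CoprimePermute (G × K)) {T : Subgroup G} [Finite T] {y : K}
    (hT : (Nat.card T).Coprime (orderOf y)) {k : ℕ} {x : G} (hx : x ^ orderOf y ^ k = 1) :
    x ∈ Subgroup.normalizer (T : Set G) := by
  induction k generalizing x with
  | zero =>
    obtain rfl : x = 1 := by simpa using hx
    exact one_mem _
  | succ k ih =>
    refine Subgroup.mem_normalizer_fintype fun g hg => ?_
    have hgT : orderOf g ∣ Nat.card T := T.orderOf_dvd_natCard hg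
    have hxy : orderOf (x, y) ∣ orderOf y ^ (k + 1) := by
      rw [Prod.orderOf_mk]
      exact Nat.lcm_dvd (orderOf_dvd_of_pow_eq_one hx) (dvd_pow_self _ k.succ_ne_zero)
    have hcop : (orderOf (x, y)).Coprime (orderOf (g, (1 : K))) := by
      rw [Prod.orderOf_mk (a := g), orderOf_one, Nat.lcm_one_right]
      exact ((hT.symm.pow_left _).coprime_dvd_left hxy).coprime_dvd_right hgT
    obtain ⟨m, n, hmn⟩ := hGK _ _ hcop
    have hfst : x * g = g ^ m * x ^ n := by simpa using congrArg Prod.fst hmn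
    have hsnd : y = y ^ n := by simpa using congrArg Prod.snd hmn
    obtain ⟨c, hc⟩ : (orderOf y : ℤ) ∣ n - 1 := by
      rw [orderOf_dvd_iff_zpow_eq_one, zpow_sub_one, ← hsnd, mul_inv_cancel]
    -- The error factor lies in `⟨x ^ orderOf y⟩`, which the induction hypothesis covers.
    have hconj : x * g * x⁻¹ = g ^ m * (x ^ orderOf y) ^ c := by
      rw [hfst, mul_assoc, ← zpow_sub_one, hc, zpow_mul, zpow_natCast]
    have hw : ((x ^ orderOf y) ^ c) ^ orderOf y ^ k = 1 := by
      rw [← zpow_natCast, zpow_comm, zpow_natCast, ← pow_mul, ← pow_succ', hx, one_zpow]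
    have hcop' : (orderOf (g ^ m * (x ^ orderOf y) ^ c)).Coprime
        (orderOf ((x ^ orderOf y) ^ c)) := by
      rw [← hconj, ← MulAut.conj_apply, MulEquiv.orderOf_eq]
      exact ((hT.pow_right k).coprime_dvd_left hgT).coprime_dvd_right
        (orderOf_dvd_of_pow_eq_one hw)
    rw [hconj]
    exact mul_mem (zpow_mem hg m)
      (mem_of_mem_normalizer_of_coprime_orderOf (zpow_mem hg m) (ih hw) hcop')

theorem CoprimePermute.exists_normal_pComplement_of_prod {K : Type*} [Group K] [Finite G]
    [Finite K] (hGK : CoprimePermute (G × K)) {p : ℕ} [Fact p.Prime] (hp : p ∣ Nat.card K) :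
    ∃ (T : Subgroup G) (_ : T.Normal), (Nat.card T).Coprime p ∧ IsPGroup p (G ⧸ T) := by
  have hG : CoprimePermute G :=
    hGK.of_injective (MonoidHom.inl G K) fun _ _ h => congrArg Prod.fst h
  obtain ⟨T, hT⟩ := hG.exists_subgroup_card_eq (Nat.ordCompl_dvd (Nat.card G) p)
  have hcop : (Nat.card T).Coprime p :=
    hT ▸ (Nat.coprime_ordCompl Fact.out Nat.card_pos.ne').symm
  have hindex : T.index = p ^ (Nat.card G).factorization p := by
    refine Nat.eq_of_mul_eq_mul_left (Nat.card_pos (α := T)) ?_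
    rw [T.card_mul_index, hT, mul_comm, Nat.ordProj_mul_ordCompl_eq_self]
  obtain ⟨y, rfl⟩ := exists_prime_orderOf_dvd_card' p hp
  obtain ⟨P⟩ : Nonempty (Sylow (orderOf y) G) := inferInstance
  have hP : (P : Subgroup G) ≤ Subgroup.normalizer (T : Set G) := fun x hx => by
    obtain ⟨k, hk⟩ := P.isPGroup' ⟨x, hx⟩
    exact hGK.mem_normalizer_of_prod hcop (congrArg Subtype.val hk)
  have hnormal := normal_of_sylow_le_normalizer P hindex hP
  exact ⟨T, hnormal, hcop, IsPGroup.of_card hindex⟩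

theorem CoprimePermute.coprime_card_of_prod {K : Type*} [Group K] [Finite G] [Finite K]
    (hGK : CoprimePermute (G × K)) {L : Subgroup G} (hL : IsNilpotentResidual L) :
    (Nat.card L).Coprime (Nat.card K) := by
  refine Nat.coprime_of_dvd fun p hp hpL hpK => ?_
  have := Fact.mk hp
  obtain ⟨T, _, hcop, hquot⟩ := hGK.exists_normal_pComplement_of_prod hpK
  have := hL.1
  have hle : L ≤ T := hL.2.2 T hquot.isNilpotent
  exact hp.ne_one (hcop.symm.eq_one_of_dvd (hpL.trans (Subgroup.card_dvd_of_le hle)))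

end Residual

section Pi

theorem CoprimePermute.exists_mul_eq_of_isNilpotent_quotient {G : Type*} [Group G]
    (hG : CoprimePermute G) (L : Subgroup G) [L.Normal] [Group.IsNilpotent (G ⧸ L)] {x y : G}
    (h : (orderOf x).Coprime (orderOf y)) :
    ∃ b ∈ Subgroup.zpowers y ⊓ L, ∃ a ∈ Subgroup.zpowers x ⊓ L, x * y = y * b * (a * x) := by
  obtain ⟨m, n, hmn⟩ := hG x y h
  let π := QuotientGroup.mk' L
  have hcop : (orderOf (π x)).Coprime (orderOf (π y)) :=
    (h.coprime_dvd_left (orderOf_map_dvd π x)).coprime_dvd_right (orderOf_map_dvd π y)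
  have hdisj : Disjoint (Subgroup.zpowers (π y)) (Subgroup.zpowers (π x)) :=
    Subgroup.disjoint_of_coprime_natCard (by simpa only [Nat.card_zpowers] using hcop.symm)
  have hmul : x * y = y * y ^ (m - 1) * (x ^ (n - 1) * x) := by
    rw [hmn, ← zpow_one_add, ← zpow_add_one, add_sub_cancel, sub_add_cancel]
  have hone : π y ^ (m - 1) * π x ^ (n - 1) = 1 := by
    have hπ := congrArg π hmul
    rw [map_mul, (commute_of_coprime_orderOf hcop).eq] at hπ
    simp only [map_mul, map_zpow, mul_assoc, mul_right_inj] at hπ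
    rw [← mul_assoc] at hπ
    exact right_eq_mul.mp hπ
  obtain ⟨hy, hx⟩ := Subgroup.disjoint_iff_mul_eq_one.mp hdisj
    (zpow_mem (Subgroup.mem_zpowers _) _) (zpow_mem (Subgroup.mem_zpowers _) _) hone
  exact ⟨y ^ (m - 1), ⟨⟨_, rfl⟩, (QuotientGroup.eq_one_iff _).mp hy⟩,
    x ^ (n - 1), ⟨⟨_, rfl⟩, (QuotientGroup.eq_one_iff _).mp hx⟩, hmul⟩

variable {ι : Type*} {G : ι → Type*} [∀ i, Group (G i)]

theorem mulSingle_mem_zpowers_of_coprime [Finite ι] [DecidableEq ι] {y : ∀ i, G i} {i : ι}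
    {a : G i} (ha : a ∈ Subgroup.zpowers (y i))
    (hcop : ∀ j, j ≠ i → (orderOf a).Coprime (orderOf (y j))) :
    Pi.mulSingle i a ∈ Subgroup.zpowers y := by
  have := Fintype.ofFinite ι
  set N := ∏ j ∈ Finset.univ.erase i, orderOf (y j)
  have hN : N.Coprime (orderOf a) :=
    Nat.Coprime.prod_left fun j hj => (hcop j (Finset.ne_of_mem_erase hj)).symm
  obtain ⟨r, hr⟩ := exists_pow_eq_self_of_coprime hN
  obtain ⟨m, rfl⟩ := ha
  have hyN : y ^ N = Pi.mulSingle i (y i ^ N) := by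
    funext j
    rcases eq_or_ne j i with rfl | hj
    · rw [Pi.pow_apply, Pi.mulSingle_eq_same]
    · rw [Pi.pow_apply, Pi.mulSingle_eq_of_ne hj, ← orderOf_dvd_iff_pow_eq_one]
      exact Finset.dvd_prod_of_mem _ (Finset.mem_erase.mpr ⟨hj, Finset.mem_univ j⟩)
  have hsingle : Pi.mulSingle i (y i ^ m) = ((y ^ N) ^ m) ^ r := by
    rw [hyN, ← Pi.mulSingle_zpow, ← Pi.mulSingle_pow, ← zpow_natCast (y i), zpow_comm,
      zpow_natCast]
    exact congrArg _ hr.symm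
  rw [hsingle]
  exact pow_mem (zpow_mem (pow_mem (Subgroup.mem_zpowers y) N) m) r

theorem mem_zpowers_of_forall_mem_inf [Finite ι] {L : ∀ i, Subgroup (G i)}
    (hL : ∀ i j, i ≠ j → (Nat.card (L i)).Coprime (Nat.card (G j))) {y z : ∀ i, G i}
    (hz : ∀ i, z i ∈ Subgroup.zpowers (y i) ⊓ L i) : z ∈ Subgroup.zpowers y := by
  classical
  refine Subgroup.pi_mem_of_mulSingle_mem _ fun i =>
    mulSingle_mem_zpowers_of_coprime (hz i).1 fun j hj => ?_
  exact ((hL i j hj.symm).coprime_dvd_left ((L i).orderOf_dvd_natCard (hz i).2)).coprime_dvd_right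
    (orderOf_dvd_natCard (y j))

theorem CoprimePermute.pi [Finite ι] (hG : ∀ i, CoprimePermute (G i)) (L : ∀ i, Subgroup (G i))
    [∀ i, (L i).Normal] [∀ i, Group.IsNilpotent (G i ⧸ L i)]
    (hL : ∀ i j, i ≠ j → (Nat.card (L i)).Coprime (Nat.card (G j))) :
    CoprimePermute (∀ i, G i) := by
  intro x y hxy
  have hcop (i : ι) : (orderOf (x i)).Coprime (orderOf (y i)) :=
    (hxy.coprime_dvd_left (orderOf_map_dvd (Pi.evalMonoidHom G i) x)).coprime_dvd_right
      (orderOf_map_dvd (Pi.evalMonoidHom G i) y)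
  choose b hb a ha hab using
    fun i => (hG i).exists_mul_eq_of_isNilpotent_quotient (L i) (hcop i)
  obtain ⟨m, rfl⟩ := mem_zpowers_of_forall_mem_inf hL hb
  obtain ⟨n, rfl⟩ := mem_zpowers_of_forall_mem_inf hL ha
  refine ⟨1 + m, n + 1, ?_⟩
  rw [zpow_one_add, zpow_add_one]
  exact funext hab

theorem injective_noncommCoprod_mulSingle [DecidableEq ι] {i j : ι} (hij : i ≠ j) :
    Function.Injective ((MonoidHom.mulSingle G i).noncommCoprod (MonoidHom.mulSingle G j)
      fun a b => Pi.mulSingle_commute hij a b) := by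
  refine (MonoidHom.noncommCoprod_injective _ _ _).mpr
    ⟨Pi.mulSingle_injective i, Pi.mulSingle_injective j, Subgroup.disjoint_def.mpr ?_⟩
  rintro _ ⟨a, rfl⟩ ⟨b, hb⟩
  have ha : a = 1 := by simpa [hij] using (congrFun hb i).symm
  rw [ha, map_one]

theorem coprimePermute_pi_iff [Finite ι] [∀ i, Finite (G i)] :
    CoprimePermute (∀ i, G i) ↔ (∀ i, CoprimePermute (G i)) ∧
      ∀ i j, i ≠ j → ∀ L : Subgroup (G i), IsNilpotentResidual L →
        (Nat.card L).Coprime (Nat.card (G j)) := by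
  classical
  constructor
  · intro h
    refine ⟨fun i => h.of_injective (MonoidHom.mulSingle G i) (Pi.mulSingle_injective i),
      fun i j hij L hL => ?_⟩
    exact (h.of_injective _ (injective_noncommCoprod_mulSingle hij)).coprime_card_of_prod hL
  · rintro ⟨hG, hcop⟩
    choose L hL using fun i => exists_isNilpotentResidual (G i)
    have (i : ι) : (L i).Normal := (hL i).1
    have (i : ι) : Group.IsNilpotent (G i ⧸ L i) := (hL i).2.1
    exact .pi hG L fun i j hij => hcop i j hij (L i) (hL i)

end Pi

theorem isSolvable_and_isBTGroup_iff {G : Type*} [Group G] [Finite G] :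
    Group.IsSolvable G ∧ IsBTGroup G ↔ Group.IsSolvable G ∧ CoprimePermute G :=
  and_congr_right fun (_ : Group.IsSolvable G) => isBTGroup_iff_coprimePermute

theorem theoremG_general {ι : Type*} [Finite ι] (G : ι → Type*) [∀ i, Group (G i)]
    [∀ i, Finite (G i)] :
    (Group.IsSolvable (∀ i, G i) ∧ IsBTGroup (∀ i, G i)) ↔
      (∀ i, Group.IsSolvable (G i) ∧ IsBTGroup (G i)) ∧
        ∀ i j, i ≠ j → ∀ L : Subgroup (G i), IsNilpotentResidual L →
          Nat.Coprime (Nat.card L) (Nat.card (G j)) := by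
  rw [isSolvable_and_isBTGroup_iff, isSolvable_pi_iff, coprimePermute_pi_iff]
  simp only [isSolvable_and_isBTGroup_iff, forall_and, and_assoc]

/-- Theorem G. -/
theorem theoremG (n : ℕ) (hn : 2 ≤ n) (G : Fin n → Type*)
    [∀ i, Group (G i)] [∀ i, Finite (G i)] :
    (IsSolvable (∀ i, G i) ∧ IsBTGroup (∀ i, G i)) ↔
      (∀ i, IsSolvable (G i) ∧ IsBTGroup (G i)) ∧
        ∀ (i j : Fin n), i ≠ j → ∀ L : Subgroup (G i), IsNilpotentResidual L →
          Nat.Coprime (Nat.card L) (Nat.card (G j)) :=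
  theoremG_general G
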